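/- Let X be a finite subset of L × B. If there exists an atom e of B such that ⋀_{a ≥ e} ⋀ X_a ≤ ⋁_{a ≥ e} ⋁ X_{-a} holds in L (the meet ranging over all x ∈ X_a for all a ∈ B with e ≤ a, the join over all x ∈ X_{-a} for all a ∈ B with e ≤ a), then X is inconsistent, i.e. X ⊢ ∅. -/

import Mathlib

/-- An entailment relation on a set `S`: a relation between finite subsets of `S`
satisfying reflexivity (R), monotonicity (M) and transitivity/cut (T). -/
def IsEntailment {S : Type*} [DecidableEq S] (E : Finset S → Finset S → Prop) : Prop :=
  (∀ X Y : Finset S, (∃ x, x ∈ X ∧ x ∈ Y) → E X Y) ∧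
  (∀ X X' Y Y' : Finset S, E X Y → E (X ∪ X') (Y ∪ Y')) ∧
  (∀ X Y : Finset S, ∀ z : S, E X (insert z Y) → E (insert z X) Y → E X Y)

variable (M : Type*) (D : Type*) [Lattice M] [BoundedOrder M] [Lattice D] [BoundedOrder D]
  [Fintype D] [DecidableEq M] [DecidableEq D]

/-- The generating axioms (s), (∧), (∨), (0), (1), (t) for the entailment relation
of `D`-valued lattice maps on `M`. -/
def LatticeAxioms : Finset (M × D) → Finset (M × D) → Prop := fun X Y =>
  (∃ x a b, a ≠ b ∧ X = {(x, a), (x, b)} ∧ Y = ∅) ∨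
  (∃ x y a b, X = {(x, a), (y, b)} ∧ Y = {(x ⊓ y, a ⊓ b)}) ∨
  (∃ x y a b, X = {(x, a), (y, b)} ∧ Y = {(x ⊔ y, a ⊔ b)}) ∨
  (X = ∅ ∧ Y = {((⊥ : M), (⊥ : D))}) ∨
  (X = ∅ ∧ Y = {((⊤ : M), (⊤ : D))}) ∨
  (∃ x : M, X = ∅ ∧ Y = Finset.univ.image (fun a : D => (x, a)))

/-- The least entailment relation on `M × D` containing all the generating axioms:
the entailment relation of `D`-valued lattice maps on `M`. -/
def LatticeEntails (X Y : Finset (M × D)) : Prop :=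
  ∀ E : Finset (M × D) → Finset (M × D) → Prop,
    IsEntailment E → (∀ X' Y', LatticeAxioms M D X' Y' → E X' Y') → E X Y

/-- `⋀_{a ≥ e} ⋀ X_a`: the meet in `L` over all `x` with `(x, a) ∈ X` for some `a ≥ e`;
the empty meet is `⊤`. -/
def atomMeet {L B : Type*} [Lattice L] [OrderTop L] [BooleanAlgebra B] [DecidableRel ((· ≤ ·) : B → B → Prop)]
    (e : B) (X : Finset (L × B)) : L :=
  (X.filter fun p => e ≤ p.2).inf Prod.fst

/-- `⋁_{a ≥ e} ⋁ X_{-a}`: the join in `L` over all `x` with `(x, aᶜ) ∈ X` for some `a ≥ e`;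
the empty join is `⊥`. -/
def atomJoin {L B : Type*} [Lattice L] [OrderBot L] [BooleanAlgebra B] [DecidableRel ((· ≤ ·) : B → B → Prop)]
    (e : B) (X : Finset (L × B)) : L :=
  (X.filter fun p => e ≤ p.2ᶜ).sup Prod.fst

/-
Read a pair `(x, a)` in `X` as the constraint `φ x = a` on a bounded lattice map `φ : M → D`.
From `X` one derives `φ (⋀ y) = ⋀ b` over the pairs `(y, b)` of any subset `Y` of `X`, and
`φ (⋁ z) = ⋁ c` over the pairs `(z, c)` of any subset `Z`. Since `φ` is monotone, `⋀ y ≤ ⋁ z`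
forces `⋀ b ≤ ⋁ c`. For `Y` the pairs with value above `e` and `Z` those whose value has its
complement above `e`, this would give `e ≤ ⋀ b ≤ ⋁ c ≤ eᶜ`, which is impossible for `e ≠ ⊥`.
-/

namespace IsEntailment

variable {S : Type*} [DecidableEq S] {E : Finset S → Finset S → Prop}

theorem mono (hE : IsEntailment E) {X X' Y Y' : Finset S} (h : E X Y) (hX : X ⊆ X')
    (hY : Y ⊆ Y') : E X' Y' := by
  simpa only [Finset.union_eq_right.2 hX, Finset.union_eq_right.2 hY] using hE.2.1 X X' Y Y' h

theorem singleton_of_mem (hE : IsEntailment E) {X : Finset S} {p : S} (hp : p ∈ X) : E X {p} :=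
  hE.1 X {p} ⟨p, hp, Finset.mem_singleton_self p⟩

theorem cut (hE : IsEntailment E) {X Y : Finset S} {p : S} (hp : E X {p})
    (h : E (insert p X) Y) : E X Y :=
  hE.2.2 X Y p (hE.mono hp subset_rfl (by simp)) h

theorem cut_of_forall (hE : IsEntailment E) {P X Y : Finset S} (hP : ∀ p ∈ P, E X {p})
    (h : E P Y) : E X Y := by
  suffices key : ∀ Q : Finset S, (∀ p ∈ Q, E X {p}) → E (Q ∪ X) Y → E X Y from
    key P hP (hE.mono h Finset.subset_union_left subset_rfl)
  intro Q
  induction Q using Finset.induction_on with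
  | empty => simp
  | insert p Q _ ih =>
    intro hQ hY
    rw [Finset.forall_mem_insert] at hQ
    rw [Finset.insert_union] at hY
    exact ih hQ.2 (hE.cut (hE.mono hQ.1 Finset.subset_union_right subset_rfl) hY)

theorem cut_pair (hE : IsEntailment E) {X Y : Finset S} {p q : S} (hp : E X {p})
    (hq : E X {q}) (h : E {p, q} Y) : E X Y :=
  hE.cut_of_forall (by simp [hp, hq]) h

end IsEntailment

namespace LatticeEntails

variable {M D}

theorem isEntailment : IsEntailment (LatticeEntails M D) :=
  ⟨fun X Y h _ hE _ => hE.1 X Y h,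
    fun X X' Y Y' h E hE hA => hE.2.1 X X' Y Y' (h E hE hA),
    fun X Y z h₁ h₂ E hE hA => hE.2.2 X Y z (h₁ E hE hA) (h₂ E hE hA)⟩

theorem of_latticeAxioms {X Y : Finset (M × D)} (h : LatticeAxioms M D X Y) :
    LatticeEntails M D X Y :=
  fun _ _ hA => hA X Y h

variable {X Y Z : Finset (M × D)} {p q : M × D}

theorem singleton_bot : LatticeEntails M D X {⊥} :=
  isEntailment.mono (of_latticeAxioms (.inr <| .inr <| .inr <| .inl ⟨rfl, rfl⟩))
    (Finset.empty_subset X) subset_rfl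

theorem singleton_top : LatticeEntails M D X {⊤} :=
  isEntailment.mono (of_latticeAxioms (.inr <| .inr <| .inr <| .inr <| .inl ⟨rfl, rfl⟩))
    (Finset.empty_subset X) subset_rfl

theorem singleton_inf (hp : LatticeEntails M D X {p}) (hq : LatticeEntails M D X {q}) :
    LatticeEntails M D X {p ⊓ q} :=
  isEntailment.cut_pair hp hq
    (of_latticeAxioms (.inr <| .inl ⟨p.1, q.1, p.2, q.2, rfl, rfl⟩))

theorem singleton_sup (hp : LatticeEntails M D X {p}) (hq : LatticeEntails M D X {q}) :
    LatticeEntails M D X {p ⊔ q} :=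
  isEntailment.cut_pair hp hq
    (of_latticeAxioms (.inr <| .inr <| .inl ⟨p.1, q.1, p.2, q.2, rfl, rfl⟩))

theorem singleton_finset_inf (hY : Y ⊆ X) :
    LatticeEntails M D X {(Y.inf Prod.fst, Y.inf Prod.snd)} := by
  induction Y using Finset.induction_on with
  | empty => exact singleton_top
  | insert p Y _ ih =>
    rw [Finset.insert_subset_iff] at hY
    rw [Finset.inf_insert, Finset.inf_insert]
    exact singleton_inf (isEntailment.singleton_of_mem hY.1) (ih hY.2)

theorem singleton_finset_sup (hZ : Z ⊆ X) :
    LatticeEntails M D X {(Z.sup Prod.fst, Z.sup Prod.snd)} := by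
  induction Z using Finset.induction_on with
  | empty => exact singleton_bot
  | insert p Z _ ih =>
    rw [Finset.insert_subset_iff] at hZ
    rw [Finset.sup_insert, Finset.sup_insert]
    exact singleton_sup (isEntailment.singleton_of_mem hZ.1) (ih hZ.2)

theorem empty_of_ne {x : M} {a b : D} (hab : a ≠ b) (ha : LatticeEntails M D X {(x, a)})
    (hb : LatticeEntails M D X {(x, b)}) : LatticeEntails M D X ∅ :=
  isEntailment.cut_pair ha hb (of_latticeAxioms (.inl ⟨x, a, b, hab, rfl, rfl⟩))

theorem empty_of_le_of_not_le {x y : M} {a b : D} (hxy : x ≤ y) (hab : ¬a ≤ b)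
    (hx : LatticeEntails M D X {(x, a)}) (hy : LatticeEntails M D X {(y, b)}) :
    LatticeEntails M D X ∅ := by
  have hy' : LatticeEntails M D X {(y, a ⊔ b)} := by
    simpa only [Prod.mk_sup_mk, sup_eq_right.2 hxy] using singleton_sup hx hy
  exact empty_of_ne (mt sup_eq_right.1 hab) hy' hy

theorem empty_of_inf_le_sup (hY : Y ⊆ X) (hZ : Z ⊆ X) (hfst : Y.inf Prod.fst ≤ Z.sup Prod.fst)
    (hsnd : ¬Y.inf Prod.snd ≤ Z.sup Prod.snd) : LatticeEntails M D X ∅ :=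
  empty_of_le_of_not_le hfst hsnd (singleton_finset_inf hY) (singleton_finset_sup hZ)

end LatticeEntails

theorem stmt4_general {L B : Type*} [Lattice L] [BoundedOrder L] [BooleanAlgebra B]
    [Fintype B] [DecidableEq L] [DecidableEq B] [DecidableRel ((· ≤ ·) : B → B → Prop)]
    {X : Finset (L × B)} {e : B} (he : e ≠ ⊥) (h : atomMeet e X ≤ atomJoin e X) :
    LatticeEntails L B X ∅ := by
  refine .empty_of_inf_le_sup (Finset.filter_subset _ X) (Finset.filter_subset _ X) h fun hle => ?_
  have le_inf_snd : e ≤ (X.filter fun p => e ≤ p.2).inf Prod.snd :=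
    Finset.le_inf fun _ hp => (Finset.mem_filter.1 hp).2
  have sup_snd_le : (X.filter fun p => e ≤ p.2ᶜ).sup Prod.snd ≤ eᶜ :=
    Finset.sup_le fun _ hp => le_compl_comm.1 (Finset.mem_filter.1 hp).2
  exact he (le_compl_self.1 (le_inf_snd.trans (hle.trans sup_snd_le)))

theorem stmt4 {L B : Type*} [DistribLattice L] [BoundedOrder L] [BooleanAlgebra B]
    [Fintype B] [DecidableEq L] [DecidableEq B] [DecidableRel ((· ≤ ·) : B → B → Prop)]
    (X : Finset (L × B))
    (h : ∃ e : B, IsAtom e ∧ atomMeet e X ≤ atomJoin e X) :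
    LatticeEntails L B X ∅ := by
  obtain ⟨e, he, hle⟩ := h
  exact stmt4_general he.ne_bot hle
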